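/- arXiv:1010.3010 — 2 statements merged into one kernel-verified Lean document; each statement's English description precedes it below -/
import Mathlib

section
/- Let ψ : ℝ³ → ℝ be smooth and ε ∈ ℝ. Define ψ̃(t,x,y) := ψ(t, X, Y) + (ε/2)(x² + y²), where X := x cos(εt) + y sin(εt) and Y := −x sin(εt) + y cos(εt). Then for all (t,x,y): (i) x ψ̃_y(t,x,y) − y ψ̃_x(t,x,y) = (X ψ_y − Y ψ_x)(t,X,Y); (ii) (x²+y²)(ψ̃_xx + ψ̃_yy)(t,x,y) − 2(x ψ̃_x + y ψ̃_y)(t,x,y) = [(X²+Y²)(ψ_xx + ψ_yy) − 2(X ψ_x + Y ψ_y)](t,X,Y); (iii) (x²+y²)(x ψ̃_tx + y ψ̃_ty)(t,x,y) + (x ψ̃_x + y ψ̃_y)(t,x,y)·[xy(ψ̃_yy − ψ̃_xx) + (x² − y²)ψ̃_xy + x ψ̃_y − y ψ̃_x](t,x,y) equals the same expression built from ψ evaluated at (t,X,Y). -/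
/-!
Statement 17: the expressions x ψ_y − y ψ_x, r²(ψ_xx+ψ_yy) − 2(xψ_x+yψ_y) and
r²(xψ_tx+yψ_ty) + (xψ_x+yψ_y)(xy(ψ_yy−ψ_xx)+(x²−y²)ψ_xy+xψ_y−yψ_x) are differential
invariants of the one-parameter group generated by J^t = tx∂_y − ty∂_x + ½(x²+y²)∂_ψ.
-/

noncomputable section

/-- Partial derivative with respect to t. -/
def dT (f : ℝ × ℝ × ℝ → ℝ) (p : ℝ × ℝ × ℝ) : ℝ := fderiv ℝ f p (1, 0, 0)
/-- Partial derivative with respect to x. -/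
def dX (f : ℝ × ℝ × ℝ → ℝ) (p : ℝ × ℝ × ℝ) : ℝ := fderiv ℝ f p (0, 1, 0)
/-- Partial derivative with respect to y. -/
def dY (f : ℝ × ℝ × ℝ → ℝ) (p : ℝ × ℝ × ℝ) : ℝ := fderiv ℝ f p (0, 0, 1)

/-- The transformed point (t, X, Y) = (t, x cos(εt) + y sin(εt), −x sin(εt) + y cos(εt)). -/
def rotPt (ε : ℝ) (p : ℝ × ℝ × ℝ) : ℝ × ℝ × ℝ :=
  (p.1, p.2.1 * Real.cos (ε * p.1) + p.2.2 * Real.sin (ε * p.1),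
   -p.2.1 * Real.sin (ε * p.1) + p.2.2 * Real.cos (ε * p.1))

/-- First invariant: x ψ_y − y ψ_x. -/
def inv1 (ψ : ℝ × ℝ × ℝ → ℝ) (p : ℝ × ℝ × ℝ) : ℝ :=
  p.2.1 * dY ψ p - p.2.2 * dX ψ p

/-- Second invariant: (x²+y²)(ψ_xx + ψ_yy) − 2(x ψ_x + y ψ_y). -/
def inv2 (ψ : ℝ × ℝ × ℝ → ℝ) (p : ℝ × ℝ × ℝ) : ℝ :=
  (p.2.1 ^ 2 + p.2.2 ^ 2) * (dX (dX ψ) p + dY (dY ψ) p)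
    - 2 * (p.2.1 * dX ψ p + p.2.2 * dY ψ p)

/-- Third invariant:
(x²+y²)(x ψ_tx + y ψ_ty) + (x ψ_x + y ψ_y)·(xy(ψ_yy − ψ_xx) + (x² − y²)ψ_xy + x ψ_y − y ψ_x). -/
def inv3 (ψ : ℝ × ℝ × ℝ → ℝ) (p : ℝ × ℝ × ℝ) : ℝ :=
  (p.2.1 ^ 2 + p.2.2 ^ 2) * (p.2.1 * dX (dT ψ) p + p.2.2 * dY (dT ψ) p)
    + (p.2.1 * dX ψ p + p.2.2 * dY ψ p) *
      (p.2.1 * p.2.2 * (dY (dY ψ) p - dX (dX ψ) p)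
        + (p.2.1 ^ 2 - p.2.2 ^ 2) * dX (dY ψ) p
        + p.2.1 * dY ψ p - p.2.2 * dX ψ p)

/-!
Let `R = x∂_x + y∂_y` and `A = x∂_y - y∂_x` be the radial and angular fields, and `r² = x² + y²`,
so that `r²(∂_x² + ∂_y²) = R² + A²`. The three expressions are `Aψ`, `R²ψ + A²ψ - 2Rψ` and
`r² R∂_tψ + Rψ · RAψ`. The map `rotPt ε` relates `R` and `A` to themselves and `∂_t` to
`∂_t - εA`, while the added term `(ε/2)r²` is killed by `A` and `∂_t` and doubled by `R`. Hence
the second expression changes by `2εr² - 2εr²` and the third by `-εr² RAψ + εr² RAψ`.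
-/

section LieDeriv

variable {𝕜 E E' F : Type*} [NontriviallyNormedField 𝕜]
  [NormedAddCommGroup E] [NormedSpace 𝕜 E] [NormedAddCommGroup E'] [NormedSpace 𝕜 E']
  [NormedAddCommGroup F] [NormedSpace 𝕜 F]

variable (𝕜) in
/-- The derivative of a function `f` along a vector field `V`, so that differential expressions
can be written as words in vector fields. Where `f` is not differentiable it is zero. -/
def lieDeriv (V : E → E) (f : E → F) (p : E) : F := fderiv 𝕜 f p (V p)

lemma lieDeriv_add (V : E → E) {f g : E → F} (hf : Differentiable 𝕜 f)
    (hg : Differentiable 𝕜 g) : lieDeriv 𝕜 V (f + g) = lieDeriv 𝕜 V f + lieDeriv 𝕜 V g := by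
  ext p
  simp [lieDeriv, fderiv_add (hf p) (hg p)]

lemma lieDeriv_sub (V : E → E) {f g : E → F} (hf : Differentiable 𝕜 f)
    (hg : Differentiable 𝕜 g) : lieDeriv 𝕜 V (f - g) = lieDeriv 𝕜 V f - lieDeriv 𝕜 V g := by
  ext p
  simp [lieDeriv, fderiv_sub (hf p) (hg p)]

lemma lieDeriv_const_smul (V : E → E) (c : 𝕜) (f : E → F) :
    lieDeriv 𝕜 V (c • f) = c • lieDeriv 𝕜 V f := by
  ext p
  simp [lieDeriv, fderiv_const_smul_field]

lemma lieDeriv_comp_of_related {V : E → E} {W : E' → E'} {φ : E → E'} {f : E' → F}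
    (hf : Differentiable 𝕜 f) (hφ : Differentiable 𝕜 φ)
    (hVW : ∀ p, fderiv 𝕜 φ p (V p) = W (φ p)) :
    lieDeriv 𝕜 V (f ∘ φ) = lieDeriv 𝕜 W f ∘ φ := by
  ext p
  simp [lieDeriv, fderiv_comp p (hf (φ p)) (hφ p), hVW]

lemma differentiable_lieDeriv {V : E → E} {f : E → F} (hV : Differentiable 𝕜 V)
    (hf : Differentiable 𝕜 (fderiv 𝕜 f)) : Differentiable 𝕜 (lieDeriv 𝕜 V f) :=
  hf.clm_apply hV

lemma lieDeriv_lieDeriv_apply (V : E → E) {W : E → E} {f : E → F} (hW : Differentiable 𝕜 W)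
    (hf : Differentiable 𝕜 (fderiv 𝕜 f)) (p : E) :
    lieDeriv 𝕜 V (lieDeriv 𝕜 W f) p =
      fderiv 𝕜 (fderiv 𝕜 f) p (V p) (W p) + fderiv 𝕜 f p (fderiv 𝕜 W p (V p)) := by
  change fderiv 𝕜 (fun q => fderiv 𝕜 f q (W q)) p (V p) = _
  simp [fderiv_clm_apply (hf p) (hW p), add_comm]

lemma differentiable_fderiv_comp {f : E' → F} {φ : E → E'} (hf : Differentiable 𝕜 f)
    (hf' : Differentiable 𝕜 (fderiv 𝕜 f)) (hφ : Differentiable 𝕜 φ)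
    (hφ' : Differentiable 𝕜 (fderiv 𝕜 φ)) : Differentiable 𝕜 (fderiv 𝕜 (f ∘ φ)) := by
  have hchain : fderiv 𝕜 (f ∘ φ) = fun p => (fderiv 𝕜 f (φ p)).comp (fderiv 𝕜 φ p) :=
    funext fun p => fderiv_comp p (hf (φ p)) (hφ p)
  rw [hchain]
  exact (hf'.comp hφ).clm_comp hφ'

end LieDeriv

section Coordinates

variable {f : ℝ × ℝ × ℝ → ℝ}

lemma dT_eq_lieDeriv (f : ℝ × ℝ × ℝ → ℝ) : dT f = lieDeriv ℝ (fun _ => (1, 0, 0)) f := rfl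

lemma dX_eq_lieDeriv (f : ℝ × ℝ × ℝ → ℝ) : dX f = lieDeriv ℝ (fun _ => (0, 1, 0)) f := rfl

lemma dY_eq_lieDeriv (f : ℝ × ℝ × ℝ → ℝ) : dY f = lieDeriv ℝ (fun _ => (0, 0, 1)) f := rfl

lemma zero_mk_eq_smul_add_smul (a b : ℝ) :
    ((0, a, b) : ℝ × ℝ × ℝ) = a • (0, 1, 0) + b • (0, 0, 1) := by
  simp

lemma fderiv_apply_zero_mk (f : ℝ × ℝ × ℝ → ℝ) (p : ℝ × ℝ × ℝ) (a b : ℝ) :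
    fderiv ℝ f p (0, a, b) = a * dX f p + b * dY f p := by
  simp only [zero_mk_eq_smul_add_smul a b, map_add, map_smul, smul_eq_mul, dX, dY]

lemma fderiv_fderiv_apply_zero_mk (hf' : Differentiable ℝ (fderiv ℝ f)) (p : ℝ × ℝ × ℝ)
    (a b c d : ℝ) :
    fderiv ℝ (fderiv ℝ f) p (0, a, b) (0, c, d) =
      a * c * dX (dX f) p + a * d * dX (dY f) p + b * c * dY (dX f) p + b * d * dY (dY f) p := by
  have hconst (u v : ℝ × ℝ × ℝ) :
      lieDeriv ℝ (fun _ => u) (lieDeriv ℝ (fun _ => v) f) p =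
        fderiv ℝ (fderiv ℝ f) p u v := by
    simp [lieDeriv_lieDeriv_apply _ (differentiable_const v) hf']
  simp only [zero_mk_eq_smul_add_smul a b, zero_mk_eq_smul_add_smul c d, map_add, map_smul,
    add_apply, smul_apply, smul_eq_mul, dX_eq_lieDeriv, dY_eq_lieDeriv, hconst]
  ring

lemma dY_dX_comm (hf : Differentiable ℝ f) (hf' : Differentiable ℝ (fderiv ℝ f)) :
    dY (dX f) = dX (dY f) := by
  ext p
  have hsymm := second_derivative_symmetric (fun q => (hf q).hasFDerivAt) (hf' p).hasFDerivAt
    (0, 0, 1) (0, 1, 0)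
  simpa [fderiv_fderiv_apply_zero_mk hf'] using hsymm

end Coordinates

section PlaneFields

/-- The vector field `x∂_x + y∂_y`, or `r∂_r` in polar coordinates. Its components are linear,
so it is encoded as a continuous linear map. -/
def radialField : ℝ × ℝ × ℝ →L[ℝ] ℝ × ℝ × ℝ :=
  (0 : ℝ × ℝ × ℝ →L[ℝ] ℝ).prod (.snd ℝ ℝ (ℝ × ℝ))

/-- The vector field `x∂_y - y∂_x`, or `∂_θ` in polar coordinates. Its components are linear,
so it is encoded as a continuous linear map. -/
def angularField : ℝ × ℝ × ℝ →L[ℝ] ℝ × ℝ × ℝ :=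
  (0 : ℝ × ℝ × ℝ →L[ℝ] ℝ).prod
    ((-(.snd ℝ ℝ ℝ ∘L .snd ℝ ℝ (ℝ × ℝ))).prod (.fst ℝ ℝ ℝ ∘L .snd ℝ ℝ (ℝ × ℝ)))

/-- The squared distance `r² = x² + y²` to the rotation axis. -/
def radiusSq (p : ℝ × ℝ × ℝ) : ℝ := p.2.1 ^ 2 + p.2.2 ^ 2

@[simp]
lemma radialField_apply (p : ℝ × ℝ × ℝ) : radialField p = (0, p.2.1, p.2.2) := rfl

@[simp]
lemma angularField_apply (p : ℝ × ℝ × ℝ) : angularField p = (0, -p.2.2, p.2.1) := rfl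

lemma contDiff_radiusSq {n : WithTop ℕ∞} : ContDiff ℝ n radiusSq := by
  unfold radiusSq
  fun_prop

lemma differentiable_radiusSq : Differentiable ℝ radiusSq :=
  contDiff_radiusSq.differentiable one_ne_zero

lemma fderiv_radiusSq_apply (p v : ℝ × ℝ × ℝ) :
    fderiv ℝ radiusSq p v = 2 * (p.2.1 * v.2.1 + p.2.2 * v.2.2) := by
  have hx := (hasFDerivAt_snd (𝕜 := ℝ) (p := p)).fst
  have hy := (hasFDerivAt_snd (𝕜 := ℝ) (p := p)).snd
  have h : HasFDerivAt radiusSq _ p := (hx.pow 2).add (hy.pow 2)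
  rw [h.fderiv]
  simp only [Nat.add_one_sub_one, pow_one, nsmul_eq_mul, Nat.cast_ofNat, add_apply, smul_apply,
    ContinuousLinearMap.comp_apply, ContinuousLinearMap.coe_snd', ContinuousLinearMap.coe_fst',
    smul_eq_mul]
  ring

lemma lieDeriv_radialField_radiusSq : lieDeriv ℝ radialField radiusSq = (2 : ℝ) • radiusSq := by
  ext p
  simp only [lieDeriv, fderiv_radiusSq_apply, radialField_apply, radiusSq, Pi.smul_apply,
    smul_eq_mul]
  ring

lemma lieDeriv_angularField_radiusSq : lieDeriv ℝ angularField radiusSq = 0 := by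
  ext p
  simp only [lieDeriv, fderiv_radiusSq_apply, angularField_apply, Pi.zero_apply]
  ring

lemma dT_radiusSq : dT radiusSq = 0 := by
  ext p
  simp [dT, fderiv_radiusSq_apply]

end PlaneFields

section VectorFieldForm

variable {f : ℝ × ℝ × ℝ → ℝ}

lemma lieDeriv_radialField_apply (f : ℝ × ℝ × ℝ → ℝ) (p : ℝ × ℝ × ℝ) :
    lieDeriv ℝ radialField f p = p.2.1 * dX f p + p.2.2 * dY f p :=
  fderiv_apply_zero_mk f p _ _

lemma inv1_eq_lieDeriv (f : ℝ × ℝ × ℝ → ℝ) : inv1 f = lieDeriv ℝ angularField f := by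
  ext p
  simp only [inv1, lieDeriv, angularField_apply, fderiv_apply_zero_mk]
  ring

lemma inv2_eq_lieDeriv (hf' : Differentiable ℝ (fderiv ℝ f)) :
    inv2 f = lieDeriv ℝ radialField (lieDeriv ℝ radialField f) +
      lieDeriv ℝ angularField (lieDeriv ℝ angularField f) - (2 : ℝ) • lieDeriv ℝ radialField f := by
  ext p
  simp only [Pi.add_apply, Pi.sub_apply, Pi.smul_apply, smul_eq_mul,
    lieDeriv_lieDeriv_apply _ (ContinuousLinearMap.differentiable _) hf',
    ContinuousLinearMap.fderiv, lieDeriv_radialField_apply]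
  simp only [radialField_apply, angularField_apply, fderiv_apply_zero_mk,
    fderiv_fderiv_apply_zero_mk hf', inv2]
  ring

lemma inv3_eq_lieDeriv (hf : Differentiable ℝ f) (hf' : Differentiable ℝ (fderiv ℝ f)) :
    inv3 f = radiusSq * lieDeriv ℝ radialField (dT f) +
      lieDeriv ℝ radialField f * lieDeriv ℝ radialField (lieDeriv ℝ angularField f) := by
  ext p
  simp only [Pi.add_apply, Pi.mul_apply,
    lieDeriv_lieDeriv_apply radialField angularField.differentiable hf',
    ContinuousLinearMap.fderiv, lieDeriv_radialField_apply]
  simp only [radialField_apply, angularField_apply, fderiv_apply_zero_mk,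
    fderiv_fderiv_apply_zero_mk hf', dY_dX_comm hf hf', inv3, radiusSq]
  ring

end VectorFieldForm

section Rotation

variable {f : ℝ × ℝ × ℝ → ℝ}

lemma contDiff_rotPt (ε : ℝ) {n : WithTop ℕ∞} : ContDiff ℝ n (rotPt ε) := by
  unfold rotPt
  fun_prop

lemma differentiable_rotPt (ε : ℝ) : Differentiable ℝ (rotPt ε) :=
  (contDiff_rotPt ε).differentiable one_ne_zero

lemma radiusSq_comp_rotPt (ε : ℝ) : radiusSq ∘ rotPt ε = radiusSq := by
  ext p
  simp only [Function.comp_apply, radiusSq, rotPt]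
  linear_combination (p.2.1 ^ 2 + p.2.2 ^ 2) * Real.sin_sq_add_cos_sq (ε * p.1)

lemma fderiv_rotPt_apply (ε : ℝ) (p v : ℝ × ℝ × ℝ) :
    fderiv ℝ (rotPt ε) p v =
      (0, (rotPt ε (p.1, v.2)).2) + v.1 • ((1, 0, 0) - ε • angularField (rotPt ε p)) := by
  have ht := hasFDerivAt_fst (𝕜 := ℝ) (p := p)
  have hx := (hasFDerivAt_snd (𝕜 := ℝ) (p := p)).fst
  have hy := (hasFDerivAt_snd (𝕜 := ℝ) (p := p)).snd
  have hcos := (ht.const_mul ε).cos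
  have hsin := (ht.const_mul ε).sin
  have h : HasFDerivAt (rotPt ε) _ p :=
    ht.prodMk (((hx.mul hcos).add (hy.mul hsin)).prodMk ((hx.neg.mul hsin).add (hy.mul hcos)))
  rw [h.fderiv]
  simp only [Pi.neg_apply, ContinuousLinearMap.prod_apply, ContinuousLinearMap.comp_apply,
    ContinuousLinearMap.coe_fst', ContinuousLinearMap.coe_snd', add_apply, smul_apply, neg_apply,
    smul_eq_mul, rotPt, angularField_apply, Prod.smul_mk, Prod.mk_sub_mk, Prod.mk_add_mk,
    Prod.mk.injEq]
  refine ⟨?_, ?_, ?_⟩ <;> ring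

lemma lieDeriv_radialField_comp_rotPt (ε : ℝ) (hf : Differentiable ℝ f) :
    lieDeriv ℝ radialField (f ∘ rotPt ε) = lieDeriv ℝ radialField f ∘ rotPt ε := by
  refine lieDeriv_comp_of_related hf (differentiable_rotPt ε) fun p => ?_
  simp [fderiv_rotPt_apply, rotPt]

lemma lieDeriv_angularField_comp_rotPt (ε : ℝ) (hf : Differentiable ℝ f) :
    lieDeriv ℝ angularField (f ∘ rotPt ε) = lieDeriv ℝ angularField f ∘ rotPt ε := by
  refine lieDeriv_comp_of_related hf (differentiable_rotPt ε) fun p => ?_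
  simp only [fderiv_rotPt_apply, rotPt, angularField_apply, zero_smul, add_zero, Prod.mk.injEq,
    true_and]
  constructor <;> ring

lemma dT_comp_rotPt (ε : ℝ) (hf : Differentiable ℝ f) :
    dT (f ∘ rotPt ε) = (dT f - ε • lieDeriv ℝ angularField f) ∘ rotPt ε := by
  have hrelated (p : ℝ × ℝ × ℝ) :
      fderiv ℝ (rotPt ε) p (1, 0, 0) = (1, 0, 0) - ε • angularField (rotPt ε p) := by
    simp [fderiv_rotPt_apply, rotPt]
  rw [dT_eq_lieDeriv, lieDeriv_comp_of_related (W := fun q => (1, 0, 0) - ε • angularField q) hf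
    (differentiable_rotPt ε) hrelated]
  ext p
  simp only [Function.comp_apply, lieDeriv, dT, map_sub, map_smul, Pi.sub_apply, Pi.smul_apply]

end Rotation

section JtTransform

variable {ψ : ℝ × ℝ × ℝ → ℝ}

/-- The function `ψ̃` obtained from `ψ` under the one-parameter group generated by `J^t`. -/
def jtTransform (ε : ℝ) (ψ : ℝ × ℝ × ℝ → ℝ) : ℝ × ℝ × ℝ → ℝ :=
  ψ ∘ rotPt ε + (ε / 2) • radiusSq

lemma differentiable_jtTransform (ε : ℝ) (hψ : Differentiable ℝ ψ) :
    Differentiable ℝ (jtTransform ε ψ) :=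
  (hψ.comp (differentiable_rotPt ε)).add (differentiable_radiusSq.const_smul _)

lemma differentiable_fderiv_jtTransform (ε : ℝ) (hψ : Differentiable ℝ ψ)
    (hψ' : Differentiable ℝ (fderiv ℝ ψ)) : Differentiable ℝ (fderiv ℝ (jtTransform ε ψ)) := by
  have hrot : Differentiable ℝ (fderiv ℝ (rotPt ε)) :=
    ((contDiff_rotPt ε (n := 2)).fderiv_right le_rfl).differentiable one_ne_zero
  have hsq : Differentiable ℝ (fderiv ℝ radiusSq) :=
    ((contDiff_radiusSq (n := 2)).fderiv_right le_rfl).differentiable one_ne_zero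
  have hsum : fderiv ℝ (jtTransform ε ψ) =
      fderiv ℝ (ψ ∘ rotPt ε) + (ε / 2) • fderiv ℝ radiusSq := by
    ext1 p
    rw [jtTransform, fderiv_add (hψ.comp (differentiable_rotPt ε) p)
      (differentiable_radiusSq.const_smul _ p), fderiv_const_smul_field]
    rfl
  rw [hsum]
  exact (differentiable_fderiv_comp hψ hψ' (differentiable_rotPt ε) hrot).add (hsq.const_smul _)

lemma lieDeriv_jtTransform (V : ℝ × ℝ × ℝ → ℝ × ℝ × ℝ) (ε : ℝ) (hψ : Differentiable ℝ ψ) :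
    lieDeriv ℝ V (jtTransform ε ψ) =
      lieDeriv ℝ V (ψ ∘ rotPt ε) + (ε / 2) • lieDeriv ℝ V radiusSq := by
  rw [jtTransform, lieDeriv_add V (hψ.comp (differentiable_rotPt ε))
    (differentiable_radiusSq.const_smul _), lieDeriv_const_smul]

lemma lieDeriv_radialField_jtTransform (ε : ℝ) (hψ : Differentiable ℝ ψ) :
    lieDeriv ℝ radialField (jtTransform ε ψ) =
      lieDeriv ℝ radialField ψ ∘ rotPt ε + ε • radiusSq := by
  rw [lieDeriv_jtTransform _ ε hψ, lieDeriv_radialField_comp_rotPt ε hψ,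
    lieDeriv_radialField_radiusSq, smul_smul, div_mul_cancel₀ ε two_ne_zero]

lemma lieDeriv_angularField_jtTransform (ε : ℝ) (hψ : Differentiable ℝ ψ) :
    lieDeriv ℝ angularField (jtTransform ε ψ) = lieDeriv ℝ angularField ψ ∘ rotPt ε := by
  rw [lieDeriv_jtTransform _ ε hψ, lieDeriv_angularField_comp_rotPt ε hψ,
    lieDeriv_angularField_radiusSq, smul_zero, add_zero]

lemma dT_jtTransform (ε : ℝ) (hψ : Differentiable ℝ ψ) :
    dT (jtTransform ε ψ) = (dT ψ - ε • lieDeriv ℝ angularField ψ) ∘ rotPt ε := by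
  rw [dT_eq_lieDeriv, lieDeriv_jtTransform _ ε hψ, ← dT_eq_lieDeriv, ← dT_eq_lieDeriv,
    dT_comp_rotPt ε hψ, dT_radiusSq, smul_zero, add_zero]

lemma inv1_jtTransform (ε : ℝ) (hψ : Differentiable ℝ ψ) :
    inv1 (jtTransform ε ψ) = inv1 ψ ∘ rotPt ε := by
  rw [inv1_eq_lieDeriv, inv1_eq_lieDeriv, lieDeriv_angularField_jtTransform ε hψ]

lemma inv2_jtTransform (ε : ℝ) (hψ : Differentiable ℝ ψ) (hψ' : Differentiable ℝ (fderiv ℝ ψ)) :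
    inv2 (jtTransform ε ψ) = inv2 ψ ∘ rotPt ε := by
  have hR := differentiable_lieDeriv radialField.differentiable hψ'
  have hA := differentiable_lieDeriv angularField.differentiable hψ'
  have hRR : lieDeriv ℝ radialField (lieDeriv ℝ radialField (jtTransform ε ψ)) =
      lieDeriv ℝ radialField (lieDeriv ℝ radialField ψ) ∘ rotPt ε + (2 * ε) • radiusSq := by
    rw [lieDeriv_radialField_jtTransform ε hψ, lieDeriv_add _ (hR.comp (differentiable_rotPt ε))
      (differentiable_radiusSq.const_smul ε), lieDeriv_radialField_comp_rotPt ε hR,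
      lieDeriv_const_smul, lieDeriv_radialField_radiusSq, smul_smul, mul_comm]
  have hAA : lieDeriv ℝ angularField (lieDeriv ℝ angularField (jtTransform ε ψ)) =
      lieDeriv ℝ angularField (lieDeriv ℝ angularField ψ) ∘ rotPt ε := by
    rw [lieDeriv_angularField_jtTransform ε hψ, lieDeriv_angularField_comp_rotPt ε hA]
  rw [inv2_eq_lieDeriv (differentiable_fderiv_jtTransform ε hψ hψ'), inv2_eq_lieDeriv hψ', hRR,
    hAA, lieDeriv_radialField_jtTransform ε hψ]
  ext p
  simp only [Pi.add_apply, Pi.sub_apply, Pi.smul_apply, Function.comp_apply, smul_eq_mul]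
  ring

lemma inv3_jtTransform (ε : ℝ) (hψ : Differentiable ℝ ψ) (hψ' : Differentiable ℝ (fderiv ℝ ψ)) :
    inv3 (jtTransform ε ψ) = inv3 ψ ∘ rotPt ε := by
  have hT : Differentiable ℝ (dT ψ) := differentiable_lieDeriv (differentiable_const _) hψ'
  have hA := differentiable_lieDeriv angularField.differentiable hψ'
  have hRT : lieDeriv ℝ radialField (dT (jtTransform ε ψ)) =
      (lieDeriv ℝ radialField (dT ψ) -
        ε • lieDeriv ℝ radialField (lieDeriv ℝ angularField ψ)) ∘ rotPt ε := by
    rw [dT_jtTransform ε hψ, lieDeriv_radialField_comp_rotPt ε (hT.sub (hA.const_smul ε)),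
      lieDeriv_sub _ hT (hA.const_smul ε), lieDeriv_const_smul]
  have hRA : lieDeriv ℝ radialField (lieDeriv ℝ angularField (jtTransform ε ψ)) =
      lieDeriv ℝ radialField (lieDeriv ℝ angularField ψ) ∘ rotPt ε := by
    rw [lieDeriv_angularField_jtTransform ε hψ, lieDeriv_radialField_comp_rotPt ε hA]
  rw [inv3_eq_lieDeriv (differentiable_jtTransform ε hψ)
    (differentiable_fderiv_jtTransform ε hψ hψ'), inv3_eq_lieDeriv hψ hψ', hRT, hRA,
    lieDeriv_radialField_jtTransform ε hψ]
  ext p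
  have hr : radiusSq (rotPt ε p) = radiusSq p := congrFun (radiusSq_comp_rotPt ε) p
  simp only [Pi.add_apply, Pi.sub_apply, Pi.mul_apply, Pi.smul_apply, Function.comp_apply,
    smul_eq_mul, hr]
  ring

end JtTransform

theorem differential_invariants_of_Jt_general {ψ : ℝ × ℝ × ℝ → ℝ} (hψ : Differentiable ℝ ψ)
    (hψ' : Differentiable ℝ (fderiv ℝ ψ)) (ε : ℝ) (p : ℝ × ℝ × ℝ) :
    inv1 (fun q => ψ (rotPt ε q) + ε / 2 * (q.2.1 ^ 2 + q.2.2 ^ 2)) p = inv1 ψ (rotPt ε p) ∧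
      inv2 (fun q => ψ (rotPt ε q) + ε / 2 * (q.2.1 ^ 2 + q.2.2 ^ 2)) p = inv2 ψ (rotPt ε p) ∧
      inv3 (fun q => ψ (rotPt ε q) + ε / 2 * (q.2.1 ^ 2 + q.2.2 ^ 2)) p = inv3 ψ (rotPt ε p) :=
  ⟨congrFun (inv1_jtTransform ε hψ) p, congrFun (inv2_jtTransform ε hψ hψ') p,
    congrFun (inv3_jtTransform ε hψ hψ') p⟩

theorem differential_invariants_of_Jt
    (ψ : ℝ × ℝ × ℝ → ℝ) (hψ : ContDiff ℝ (⊤ : ℕ∞) ψ) (ε : ℝ) :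
    ∀ p : ℝ × ℝ × ℝ,
      inv1 (fun q => ψ (rotPt ε q) + ε / 2 * (q.2.1 ^ 2 + q.2.2 ^ 2)) p
        = inv1 ψ (rotPt ε p) ∧
      inv2 (fun q => ψ (rotPt ε q) + ε / 2 * (q.2.1 ^ 2 + q.2.2 ^ 2)) p
        = inv2 ψ (rotPt ε p) ∧
      inv3 (fun q => ψ (rotPt ε q) + ε / 2 * (q.2.1 ^ 2 + q.2.2 ^ 2)) p
        = inv3 ψ (rotPt ε p) := by
  exact differential_invariants_of_Jt_general (hψ.differentiable (by simp))
    ((hψ.fderiv_right (m := 1) (by norm_cast)).differentiable one_ne_zero) ε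
end
end

section
/- For a smooth function ψ : ℝ³ → ℝ define ζ := ψ_xx + ψ_yy, W(ψ) := (ζ_t + ψ_x ζ_y − ψ_y ζ_x)/((ψ_xx − ψ_yy)² + 4ψ_xy²), wherever the denominator is nonzero. Then W is invariant under each of the following transformations, i.e., W(ψ̃) at (t,x,y) equals W(ψ) at the corresponding source point: (a) ψ̃(t,x,y) = e^{−ε}ψ(e^{−ε}t,x,y); (b) ψ̃(t,x,y) = e^{2ε}ψ(t,e^{−ε}x,e^{−ε}y); (c) ψ̃(t,x,y) = ψ(t, x cos(θ+εt) + y sin(θ+εt), −x sin(θ+εt) + y cos(θ+εt)) + (ε/2)(x²+y²) for any θ, ε ∈ ℝ; (d) ψ̃(t,x,y) = ψ(t, x−γ¹(t), y−γ²(t)) − γ¹'(t)y + γ²'(t)x for any smooth γ¹, γ²; (e) ψ̃(t,x,y) = ψ(t,x,y) + χ(t) for any smooth χ. -/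
/-!
Statement 18: the differential function W(ψ) = (ζ_t + ψ_x ζ_y − ψ_y ζ_x)/((ψ_xx − ψ_yy)² + 4ψ_xy²)
is a differential invariant of the one-parameter symmetry groups generated by D₁, D₂, J + J^t
(rotations with time-dependent angle θ + εt), X(γ¹), Y(γ²) and Z(χ).
-/

noncomputable section

/-- The vorticity ζ := ψ_xx + ψ_yy. -/
def vort (ψ : ℝ × ℝ × ℝ → ℝ) : ℝ × ℝ × ℝ → ℝ := fun p => dX (dX ψ) p + dY (dY ψ) p

/-- The numerator ζ_t + ψ_x ζ_y − ψ_y ζ_x. -/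
def Wnum (ψ : ℝ × ℝ × ℝ → ℝ) (p : ℝ × ℝ × ℝ) : ℝ :=
  dT (vort ψ) p + dX ψ p * dY (vort ψ) p - dY ψ p * dX (vort ψ) p

/-- The denominator (ψ_xx − ψ_yy)² + 4 ψ_xy². -/
def Wden (ψ : ℝ × ℝ × ℝ → ℝ) (p : ℝ × ℝ × ℝ) : ℝ :=
  (dX (dX ψ) p - dY (dY ψ) p) ^ 2 + 4 * (dX (dY ψ) p) ^ 2

/-- W(ψ) = (ζ_t + ψ_x ζ_y − ψ_y ζ_x)/((ψ_xx − ψ_yy)² + 4ψ_xy²). -/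
def W (ψ : ℝ × ℝ × ℝ → ℝ) (p : ℝ × ℝ × ℝ) : ℝ := Wnum ψ p / Wden ψ p

/-!
Every transformation in question has the form `ψ̃ = k ψ ∘ Φ + R`, where `Φ` rescales time by `a`,
acts on each plane `t = const` by a similarity with ratio `r` that rotates at the constant rate
`ε`, and `k r² = a`. The term `R` is quadratic in `(x, y)` and its gradient is exactly what is
needed for the material derivatives to correspond: `V_ψ̃ (f ∘ Φ) = a (V_ψ f) ∘ Φ`. Since
`ζ̃ = a ζ ∘ Φ + 2ε`, with `ε` independent of time, the numerator of `W` gets multiplied by `a²`.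
The trace-free part of the Hessian is multiplied by `a` and rotated, so the denominator is
multiplied by `a²` as well.
-/

section PartialDerivatives

variable {f : ℝ × ℝ × ℝ → ℝ} {p : ℝ × ℝ × ℝ}

theorem contDiff_dX {n : WithTop ℕ∞} (hf : ContDiff ℝ (n + 1) f) : ContDiff ℝ n (dX f) :=
  (hf.fderiv_right le_rfl).clm_apply contDiff_const

theorem contDiff_dY {n : WithTop ℕ∞} (hf : ContDiff ℝ (n + 1) f) : ContDiff ℝ n (dY f) :=
  (hf.fderiv_right le_rfl).clm_apply contDiff_const

theorem contDiff_vort {n : WithTop ℕ∞} (hf : ContDiff ℝ (n + 1 + 1) f) :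
    ContDiff ℝ n (vort f) :=
  (contDiff_dX (contDiff_dX hf)).add (contDiff_dY (contDiff_dY hf))

theorem dY_dX_eq_dX_dY (hf : ContDiff ℝ 2 f) : dY (dX f) = dX (dY f) := by
  funext p
  have hsymm : IsSymmSndFDerivAt ℝ f p := hf.contDiffAt.isSymmSndFDerivAt (by simp)
  have hdiff : DifferentiableAt ℝ (fderiv ℝ f) p :=
    (hf.fderiv_right (m := 1) (by norm_num)).differentiable one_ne_zero p
  have hsnd (v w : ℝ × ℝ × ℝ) :
      fderiv ℝ (fun q => fderiv ℝ f q v) p w = fderiv ℝ (fderiv ℝ f) p w v := by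
    simp [fderiv_clm_apply hdiff (differentiableAt_const v)]
  exact (hsnd _ _).trans ((hsymm.eq _ _).trans (hsnd _ _).symm)

theorem hasDerivAt_comp_curve {t x y : ℝ → ℝ} {t' x' y' r : ℝ}
    (hf : DifferentiableAt ℝ f (t r, x r, y r)) (ht : HasDerivAt t t' r)
    (hx : HasDerivAt x x' r) (hy : HasDerivAt y y' r) :
    HasDerivAt (fun r => f (t r, x r, y r))
      (t' * dT f (t r, x r, y r) + x' * dX f (t r, x r, y r) + y' * dY f (t r, x r, y r)) r := by
  refine (hf.hasFDerivAt.comp_hasDerivAt r (ht.prodMk (hx.prodMk hy))).congr_deriv ?_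
  have hbasis : (t', x', y') =
      t' • ((1, 0, 0) : ℝ × ℝ × ℝ) + x' • (0, 1, 0) + y' • (0, 0, 1) := by simp
  rw [hbasis]
  simp only [map_add, map_smul, smul_eq_mul, dT, dX, dY]

theorem dT_eq_of_hasDerivAt {f' : ℝ} (hf : DifferentiableAt ℝ f p)
    (h : HasDerivAt (fun t => f (t, p.2.1, p.2.2)) f' p.1) : dT f p = f' := by
  simpa using (hasDerivAt_comp_curve hf (hasDerivAt_id p.1) (hasDerivAt_const _ p.2.1)
    (hasDerivAt_const _ p.2.2)).unique h

theorem dX_eq_of_hasDerivAt {f' : ℝ} (hf : DifferentiableAt ℝ f p)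
    (h : HasDerivAt (fun x => f (p.1, x, p.2.2)) f' p.2.1) : dX f p = f' := by
  simpa using (hasDerivAt_comp_curve hf (hasDerivAt_const _ p.1) (hasDerivAt_id p.2.1)
    (hasDerivAt_const _ p.2.2)).unique h

theorem dY_eq_of_hasDerivAt {f' : ℝ} (hf : DifferentiableAt ℝ f p)
    (h : HasDerivAt (fun y => f (p.1, p.2.1, y)) f' p.2.2) : dY f p = f' := by
  simpa using (hasDerivAt_comp_curve hf (hasDerivAt_const _ p.1) (hasDerivAt_const _ p.2.1)
    (hasDerivAt_id p.2.2)).unique h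

end PartialDerivatives

/-- The derivative `V f = f_t + ψ_x f_y − ψ_y f_x` along the flow with stream function `ψ`; the
numerator of `W` is `V ζ`. -/
def materialDeriv (ψ f : ℝ × ℝ × ℝ → ℝ) (p : ℝ × ℝ × ℝ) : ℝ :=
  dT f p + dX ψ p * dY f p - dY ψ p * dX f p

theorem materialDeriv_const_mul_add_const {ψ f : ℝ × ℝ × ℝ → ℝ} {p : ℝ × ℝ × ℝ}
    (hf : DifferentiableAt ℝ f p) (a b : ℝ) :
    materialDeriv ψ (fun q => a * f q + b) p = a * materialDeriv ψ f p := by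
  have hfderiv : fderiv ℝ (fun q => a * f q + b) p = a • fderiv ℝ f p := by
    rw [fderiv_add_const, fderiv_const_mul hf]
  simp only [materialDeriv, dT, dX, dY, hfderiv, smul_apply, smul_eq_mul]
  ring

/-- A point symmetry of the vorticity equation: the composition of a gauge shift of `ψ`
(generator `Z(χ)`), a generalized Galilean boost (`X(γ¹)`, `Y(γ²)`), a rotation at constant rate
(`J`, `J^t`) and scalings of time and space (`D₁`, `D₂`). At time `t` the rotation is through
`angle + spin * t`. The default values are those of the identity. -/
structure VorticitySymmetry where
  timeScale : ℝ := 1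
  spaceScale : ℝ := 1
  angle : ℝ := 0
  spin : ℝ := 0
  shiftX : ℝ → ℝ := fun _ => 0
  shiftY : ℝ → ℝ := fun _ => 0
  gauge : ℝ → ℝ := fun _ => 0
  timeScale_ne_zero : timeScale ≠ 0 := by simp
  spaceScale_ne_zero : spaceScale ≠ 0 := by simp
  contDiff_shiftX : ContDiff ℝ 2 shiftX := by fun_prop
  contDiff_shiftY : ContDiff ℝ 2 shiftY := by fun_prop
  differentiable_gauge : Differentiable ℝ gauge := by fun_prop

namespace VorticitySymmetry

variable (S : VorticitySymmetry)

/-- The diagonal entry of the similarity matrix at time `t`. -/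
def cosCoeff (t : ℝ) : ℝ := S.spaceScale * Real.cos (S.angle + S.spin * t)

/-- The off-diagonal entry of the similarity matrix at time `t`. -/
def sinCoeff (t : ℝ) : ℝ := S.spaceScale * Real.sin (S.angle + S.spin * t)

/-- The factor `k = a / r²` by which the stream function is multiplied, forced by the scalings of
time and space. -/
def amplitude : ℝ := S.timeScale / S.spaceScale ^ 2

/-- The map `Φ` sending a point to the source point at which the original stream function is
evaluated. -/
def sourcePoint (q : ℝ × ℝ × ℝ) : ℝ × ℝ × ℝ :=
  (S.timeScale * q.1,
    (q.2.1 - S.shiftX q.1) * S.cosCoeff q.1 + (q.2.2 - S.shiftY q.1) * S.sinCoeff q.1,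
    -(q.2.1 - S.shiftX q.1) * S.sinCoeff q.1 + (q.2.2 - S.shiftY q.1) * S.cosCoeff q.1)

/-- The term `R`: the stream function of the motion of the moving reference frame, plus the gauge
shift. -/
def drift (q : ℝ × ℝ × ℝ) : ℝ :=
  S.spin / 2 * ((q.2.1 - S.shiftX q.1) ^ 2 + (q.2.2 - S.shiftY q.1) ^ 2)
    - deriv S.shiftX q.1 * q.2.2 + deriv S.shiftY q.1 * q.2.1 + S.gauge q.1

/-- The transformed stream function `ψ̃ = k ψ ∘ Φ + R`. -/
def act (ψ : ℝ × ℝ × ℝ → ℝ) : ℝ × ℝ × ℝ → ℝ :=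
  fun q => S.amplitude * ψ (S.sourcePoint q) + S.drift q

theorem cosCoeff_sq_add_sinCoeff_sq (t : ℝ) :
    S.cosCoeff t ^ 2 + S.sinCoeff t ^ 2 = S.spaceScale ^ 2 := by
  rw [cosCoeff, sinCoeff, mul_pow, mul_pow, ← mul_add, Real.cos_sq_add_sin_sq, mul_one]

theorem timeScale_eq_amplitude_mul (t : ℝ) :
    S.timeScale = S.amplitude * (S.cosCoeff t ^ 2 + S.sinCoeff t ^ 2) := by
  rw [cosCoeff_sq_add_sinCoeff_sq, amplitude,
    div_mul_cancel₀ _ (pow_ne_zero 2 S.spaceScale_ne_zero)]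

theorem hasDerivAt_phase (t : ℝ) : HasDerivAt (fun t => S.angle + S.spin * t) S.spin t := by
  simpa using ((hasDerivAt_id t).const_mul S.spin).const_add S.angle

theorem hasDerivAt_cosCoeff (t : ℝ) : HasDerivAt S.cosCoeff (-S.spin * S.sinCoeff t) t :=
  ((S.hasDerivAt_phase t).cos.const_mul S.spaceScale).congr_deriv (by rw [sinCoeff]; ring)

theorem hasDerivAt_sinCoeff (t : ℝ) : HasDerivAt S.sinCoeff (S.spin * S.cosCoeff t) t :=
  ((S.hasDerivAt_phase t).sin.const_mul S.spaceScale).congr_deriv (by rw [cosCoeff]; ring)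

@[fun_prop]
theorem differentiable_cosCoeff : Differentiable ℝ S.cosCoeff :=
  fun t => (S.hasDerivAt_cosCoeff t).differentiableAt

@[fun_prop]
theorem differentiable_sinCoeff : Differentiable ℝ S.sinCoeff :=
  fun t => (S.hasDerivAt_sinCoeff t).differentiableAt

@[fun_prop]
theorem differentiable_shiftX : Differentiable ℝ S.shiftX :=
  S.contDiff_shiftX.differentiable two_ne_zero

@[fun_prop]
theorem differentiable_shiftY : Differentiable ℝ S.shiftY :=
  S.contDiff_shiftY.differentiable two_ne_zero

@[fun_prop]
theorem differentiable_deriv_shiftX : Differentiable ℝ (deriv S.shiftX) :=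
  S.contDiff_shiftX.differentiable_deriv_two

@[fun_prop]
theorem differentiable_deriv_shiftY : Differentiable ℝ (deriv S.shiftY) :=
  S.contDiff_shiftY.differentiable_deriv_two

@[fun_prop]
theorem differentiable_sourcePoint : Differentiable ℝ S.sourcePoint := by
  unfold sourcePoint
  fun_prop

@[fun_prop]
theorem differentiable_act {ψ : ℝ × ℝ × ℝ → ℝ} (hψ : Differentiable ℝ ψ) :
    Differentiable ℝ (S.act ψ) := by
  have := S.differentiable_gauge
  unfold act drift
  fun_prop

theorem hasDerivAt_drift_x (q : ℝ × ℝ × ℝ) :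
    HasDerivAt (fun x => S.drift (q.1, x, q.2.2))
      (S.spin * (q.2.1 - S.shiftX q.1) + deriv S.shiftY q.1) q.2.1 := by
  have hx := (hasDerivAt_id q.2.1).sub_const (S.shiftX q.1)
  have hsq := ((hx.pow 2).add_const ((q.2.2 - S.shiftY q.1) ^ 2)).const_mul (S.spin / 2)
  refine (((hsq.sub_const (deriv S.shiftX q.1 * q.2.2)).add
    ((hasDerivAt_id q.2.1).const_mul (deriv S.shiftY q.1))).add_const
    (S.gauge q.1)).congr_deriv ?_
  simp only [id]
  ring

theorem hasDerivAt_drift_y (q : ℝ × ℝ × ℝ) :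
    HasDerivAt (fun y => S.drift (q.1, q.2.1, y))
      (S.spin * (q.2.2 - S.shiftY q.1) - deriv S.shiftX q.1) q.2.2 := by
  have hy := (hasDerivAt_id q.2.2).sub_const (S.shiftY q.1)
  have hsq := ((hy.pow 2).const_add ((q.2.1 - S.shiftX q.1) ^ 2)).const_mul (S.spin / 2)
  refine (((hsq.sub ((hasDerivAt_id q.2.2).const_mul (deriv S.shiftX q.1))).add_const
    (deriv S.shiftY q.1 * q.2.1)).add_const (S.gauge q.1)).congr_deriv ?_
  simp only [id]
  ring

section ChainRule

variable {f : ℝ × ℝ × ℝ → ℝ} (hf : Differentiable ℝ f) (q : ℝ × ℝ × ℝ)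
include hf

theorem hasDerivAt_comp_sourcePoint_time :
    HasDerivAt (fun t => f (S.sourcePoint (t, q.2.1, q.2.2)))
      (S.timeScale * dT f (S.sourcePoint q)
        + (S.spin * (S.sourcePoint q).2.2 - deriv S.shiftX q.1 * S.cosCoeff q.1
          - deriv S.shiftY q.1 * S.sinCoeff q.1) * dX f (S.sourcePoint q)
        + (-S.spin * (S.sourcePoint q).2.1 + deriv S.shiftX q.1 * S.sinCoeff q.1
          - deriv S.shiftY q.1 * S.cosCoeff q.1) * dY f (S.sourcePoint q)) q.1 := by
  have ht := (hasDerivAt_id q.1).const_mul S.timeScale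
  have hx := (S.differentiable_shiftX q.1).hasDerivAt.const_sub q.2.1
  have hy := (S.differentiable_shiftY q.1).hasDerivAt.const_sub q.2.2
  have hc := S.hasDerivAt_cosCoeff q.1
  have hs := S.hasDerivAt_sinCoeff q.1
  refine (hasDerivAt_comp_curve (hf _) ht ((hx.mul hc).add (hy.mul hs))
    ((hx.neg.mul hs).add (hy.mul hc))).congr_deriv ?_
  simp only [sourcePoint, Pi.add_apply, Pi.mul_apply, Pi.neg_apply, id]
  ring

theorem hasDerivAt_comp_sourcePoint_x :
    HasDerivAt (fun x => f (S.sourcePoint (q.1, x, q.2.2)))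
      (S.cosCoeff q.1 * dX f (S.sourcePoint q) - S.sinCoeff q.1 * dY f (S.sourcePoint q))
      q.2.1 := by
  have hx := (hasDerivAt_id q.2.1).sub_const (S.shiftX q.1)
  refine (hasDerivAt_comp_curve (hf _) (hasDerivAt_const _ (S.timeScale * q.1))
    ((hx.mul_const (S.cosCoeff q.1)).add_const ((q.2.2 - S.shiftY q.1) * S.sinCoeff q.1))
    ((hx.neg.mul_const (S.sinCoeff q.1)).add_const
      ((q.2.2 - S.shiftY q.1) * S.cosCoeff q.1))).congr_deriv ?_
  simp only [sourcePoint, Pi.neg_apply, id]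
  ring

theorem hasDerivAt_comp_sourcePoint_y :
    HasDerivAt (fun y => f (S.sourcePoint (q.1, q.2.1, y)))
      (S.sinCoeff q.1 * dX f (S.sourcePoint q) + S.cosCoeff q.1 * dY f (S.sourcePoint q))
      q.2.2 := by
  have hy := (hasDerivAt_id q.2.2).sub_const (S.shiftY q.1)
  refine (hasDerivAt_comp_curve (hf _) (hasDerivAt_const _ (S.timeScale * q.1))
    ((hy.mul_const (S.sinCoeff q.1)).const_add ((q.2.1 - S.shiftX q.1) * S.cosCoeff q.1))
    ((hy.mul_const (S.cosCoeff q.1)).const_add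
      (-(q.2.1 - S.shiftX q.1) * S.sinCoeff q.1))).congr_deriv ?_
  simp only [sourcePoint, id]
  ring

end ChainRule

section FirstOrder

variable {ψ : ℝ × ℝ × ℝ → ℝ} (hψ : Differentiable ℝ ψ)
include hψ

theorem dX_act : dX (S.act ψ) = fun q =>
    S.amplitude * (S.cosCoeff q.1 * dX ψ (S.sourcePoint q)
      - S.sinCoeff q.1 * dY ψ (S.sourcePoint q))
    + (S.spin * (q.2.1 - S.shiftX q.1) + deriv S.shiftY q.1) := by
  funext q
  exact dX_eq_of_hasDerivAt (S.differentiable_act hψ q)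
    (((S.hasDerivAt_comp_sourcePoint_x hψ q).const_mul S.amplitude).add (S.hasDerivAt_drift_x q))

theorem dY_act : dY (S.act ψ) = fun q =>
    S.amplitude * (S.sinCoeff q.1 * dX ψ (S.sourcePoint q)
      + S.cosCoeff q.1 * dY ψ (S.sourcePoint q))
    + (S.spin * (q.2.2 - S.shiftY q.1) - deriv S.shiftX q.1) := by
  funext q
  exact dY_eq_of_hasDerivAt (S.differentiable_act hψ q)
    (((S.hasDerivAt_comp_sourcePoint_y hψ q).const_mul S.amplitude).add (S.hasDerivAt_drift_y q))

theorem materialDeriv_act_comp_sourcePoint {f : ℝ × ℝ × ℝ → ℝ} (hf : Differentiable ℝ f)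
    (p : ℝ × ℝ × ℝ) :
    materialDeriv (S.act ψ) (fun q => f (S.sourcePoint q)) p
      = S.timeScale * materialDeriv ψ f (S.sourcePoint p) := by
  have hcomp : DifferentiableAt ℝ (fun q => f (S.sourcePoint q)) p := by fun_prop
  rw [materialDeriv, dT_eq_of_hasDerivAt hcomp (S.hasDerivAt_comp_sourcePoint_time hf p),
    dX_eq_of_hasDerivAt hcomp (S.hasDerivAt_comp_sourcePoint_x hf p),
    dY_eq_of_hasDerivAt hcomp (S.hasDerivAt_comp_sourcePoint_y hf p),
    S.dX_act hψ, S.dY_act hψ, materialDeriv, S.timeScale_eq_amplitude_mul p.1]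
  have hx : (S.sourcePoint p).2.1 = (p.2.1 - S.shiftX p.1) * S.cosCoeff p.1
      + (p.2.2 - S.shiftY p.1) * S.sinCoeff p.1 := rfl
  have hy : (S.sourcePoint p).2.2 = -(p.2.1 - S.shiftX p.1) * S.sinCoeff p.1
      + (p.2.2 - S.shiftY p.1) * S.cosCoeff p.1 := rfl
  rw [hx, hy]
  ring

end FirstOrder

section SecondOrder

variable {ψ : ℝ × ℝ × ℝ → ℝ} (hψ : ContDiff ℝ 2 ψ)
include hψ

theorem dX_dX_act (q : ℝ × ℝ × ℝ) : dX (dX (S.act ψ)) q =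
    S.amplitude * (S.cosCoeff q.1 ^ 2 * dX (dX ψ) (S.sourcePoint q)
      - 2 * S.cosCoeff q.1 * S.sinCoeff q.1 * dX (dY ψ) (S.sourcePoint q)
      + S.sinCoeff q.1 ^ 2 * dY (dY ψ) (S.sourcePoint q)) + S.spin := by
  have hψX : Differentiable ℝ (dX ψ) := (contDiff_dX (n := 1) hψ).differentiable one_ne_zero
  have hψY : Differentiable ℝ (dY ψ) := (contDiff_dY (n := 1) hψ).differentiable one_ne_zero
  rw [S.dX_act (hψ.differentiable two_ne_zero)]
  refine dX_eq_of_hasDerivAt (by fun_prop) ?_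
  refine (((((S.hasDerivAt_comp_sourcePoint_x hψX q).const_mul (S.cosCoeff q.1)).sub
    ((S.hasDerivAt_comp_sourcePoint_x hψY q).const_mul (S.sinCoeff q.1))).const_mul
    S.amplitude).add ((((hasDerivAt_id q.2.1).sub_const (S.shiftX q.1)).const_mul
    S.spin).add_const (deriv S.shiftY q.1))).congr_deriv ?_
  rw [dY_dX_eq_dX_dY hψ]
  ring

theorem dX_dY_act (q : ℝ × ℝ × ℝ) : dX (dY (S.act ψ)) q =
    S.amplitude * (S.cosCoeff q.1 * S.sinCoeff q.1
        * (dX (dX ψ) (S.sourcePoint q) - dY (dY ψ) (S.sourcePoint q))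
      + (S.cosCoeff q.1 ^ 2 - S.sinCoeff q.1 ^ 2) * dX (dY ψ) (S.sourcePoint q)) := by
  have hψX : Differentiable ℝ (dX ψ) := (contDiff_dX (n := 1) hψ).differentiable one_ne_zero
  have hψY : Differentiable ℝ (dY ψ) := (contDiff_dY (n := 1) hψ).differentiable one_ne_zero
  rw [S.dY_act (hψ.differentiable two_ne_zero)]
  refine dX_eq_of_hasDerivAt (by fun_prop) ?_
  refine (((((S.hasDerivAt_comp_sourcePoint_x hψX q).const_mul (S.sinCoeff q.1)).add
    ((S.hasDerivAt_comp_sourcePoint_x hψY q).const_mul (S.cosCoeff q.1))).const_mul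
    S.amplitude).add_const (S.spin * (q.2.2 - S.shiftY q.1) - deriv S.shiftX q.1)).congr_deriv ?_
  rw [dY_dX_eq_dX_dY hψ]
  ring

theorem dY_dY_act (q : ℝ × ℝ × ℝ) : dY (dY (S.act ψ)) q =
    S.amplitude * (S.sinCoeff q.1 ^ 2 * dX (dX ψ) (S.sourcePoint q)
      + 2 * S.cosCoeff q.1 * S.sinCoeff q.1 * dX (dY ψ) (S.sourcePoint q)
      + S.cosCoeff q.1 ^ 2 * dY (dY ψ) (S.sourcePoint q)) + S.spin := by
  have hψX : Differentiable ℝ (dX ψ) := (contDiff_dX (n := 1) hψ).differentiable one_ne_zero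
  have hψY : Differentiable ℝ (dY ψ) := (contDiff_dY (n := 1) hψ).differentiable one_ne_zero
  rw [S.dY_act (hψ.differentiable two_ne_zero)]
  refine dY_eq_of_hasDerivAt (by fun_prop) ?_
  refine (((((S.hasDerivAt_comp_sourcePoint_y hψX q).const_mul (S.sinCoeff q.1)).add
    ((S.hasDerivAt_comp_sourcePoint_y hψY q).const_mul (S.cosCoeff q.1))).const_mul
    S.amplitude).add ((((hasDerivAt_id q.2.2).sub_const (S.shiftY q.1)).const_mul
    S.spin).sub_const (deriv S.shiftX q.1))).congr_deriv ?_
  rw [dY_dX_eq_dX_dY hψ]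
  ring

theorem vort_act :
    vort (S.act ψ) = fun q => S.timeScale * vort ψ (S.sourcePoint q) + 2 * S.spin := by
  funext q
  rw [vort, S.dX_dX_act hψ, S.dY_dY_act hψ, vort, S.timeScale_eq_amplitude_mul q.1]
  ring

theorem Wden_act (p : ℝ × ℝ × ℝ) :
    Wden (S.act ψ) p = S.timeScale ^ 2 * Wden ψ (S.sourcePoint p) := by
  rw [Wden, S.dX_dX_act hψ, S.dY_dY_act hψ, S.dX_dY_act hψ, Wden, S.timeScale_eq_amplitude_mul p.1]
  ring

end SecondOrder

theorem Wnum_act {ψ : ℝ × ℝ × ℝ → ℝ} (hψ : ContDiff ℝ 3 ψ) (p : ℝ × ℝ × ℝ) :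
    Wnum (S.act ψ) p = S.timeScale ^ 2 * Wnum ψ (S.sourcePoint p) := by
  have hψ₂ : ContDiff ℝ 2 ψ := hψ.of_le (by norm_num)
  have hvort : Differentiable ℝ (vort ψ) :=
    (contDiff_vort (n := 1) (hψ.of_le (by norm_num))).differentiable one_ne_zero
  calc Wnum (S.act ψ) p
      = materialDeriv (S.act ψ)
          (fun q => S.timeScale * vort ψ (S.sourcePoint q) + 2 * S.spin) p := by
        rw [← S.vort_act hψ₂]; rfl
    _ = S.timeScale * materialDeriv (S.act ψ) (fun q => vort ψ (S.sourcePoint q)) p :=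
        materialDeriv_const_mul_add_const (by fun_prop) _ _
    _ = S.timeScale * (S.timeScale * Wnum ψ (S.sourcePoint p)) := by
        rw [S.materialDeriv_act_comp_sourcePoint (hψ₂.differentiable two_ne_zero) hvort]; rfl
    _ = S.timeScale ^ 2 * Wnum ψ (S.sourcePoint p) := by ring

end VorticitySymmetry

theorem W_is_differential_invariant_general (S : VorticitySymmetry) {ψ : ℝ × ℝ × ℝ → ℝ}
    (hψ : ContDiff ℝ 3 ψ) {p : ℝ × ℝ × ℝ} (hden : Wden ψ (S.sourcePoint p) ≠ 0) :
    Wden (S.act ψ) p ≠ 0 ∧ W (S.act ψ) p = W ψ (S.sourcePoint p) := by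
  have hscale : S.timeScale ^ 2 ≠ 0 := pow_ne_zero 2 S.timeScale_ne_zero
  have hWden := S.Wden_act (hψ.of_le (by norm_num)) p
  refine ⟨hWden ▸ mul_ne_zero hscale hden, ?_⟩
  rw [W, W, S.Wnum_act hψ, hWden, mul_div_mul_left _ _ hscale]

theorem W_is_differential_invariant
    (ψ : ℝ × ℝ × ℝ → ℝ) (hψ : ContDiff ℝ (⊤ : ℕ∞) ψ) :
    -- (a) ψ̃(t,x,y) = e^{−ε} ψ(e^{−ε}t, x, y)
    (∀ ε : ℝ, ∀ p : ℝ × ℝ × ℝ,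
      Wden ψ (Real.exp (-ε) * p.1, p.2.1, p.2.2) ≠ 0 →
      W (fun q => Real.exp (-ε) * ψ (Real.exp (-ε) * q.1, q.2.1, q.2.2)) p
        = W ψ (Real.exp (-ε) * p.1, p.2.1, p.2.2)) ∧
    -- (b) ψ̃(t,x,y) = e^{2ε} ψ(t, e^{−ε}x, e^{−ε}y)
    (∀ ε : ℝ, ∀ p : ℝ × ℝ × ℝ,
      Wden ψ (p.1, Real.exp (-ε) * p.2.1, Real.exp (-ε) * p.2.2) ≠ 0 →
      W (fun q => Real.exp (2 * ε) * ψ (q.1, Real.exp (-ε) * q.2.1, Real.exp (-ε) * q.2.2)) p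
        = W ψ (p.1, Real.exp (-ε) * p.2.1, Real.exp (-ε) * p.2.2)) ∧
    -- (c) rotation through angle θ + εt together with the ε/2 (x²+y²) shift
    (∀ θ ε : ℝ, ∀ p : ℝ × ℝ × ℝ,
      Wden ψ (p.1, p.2.1 * Real.cos (θ + ε * p.1) + p.2.2 * Real.sin (θ + ε * p.1),
              -p.2.1 * Real.sin (θ + ε * p.1) + p.2.2 * Real.cos (θ + ε * p.1)) ≠ 0 →
      W (fun q => ψ (q.1, q.2.1 * Real.cos (θ + ε * q.1) + q.2.2 * Real.sin (θ + ε * q.1),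
                     -q.2.1 * Real.sin (θ + ε * q.1) + q.2.2 * Real.cos (θ + ε * q.1))
          + ε / 2 * (q.2.1 ^ 2 + q.2.2 ^ 2)) p
        = W ψ (p.1, p.2.1 * Real.cos (θ + ε * p.1) + p.2.2 * Real.sin (θ + ε * p.1),
               -p.2.1 * Real.sin (θ + ε * p.1) + p.2.2 * Real.cos (θ + ε * p.1))) ∧
    -- (d) generalized Galilean transformations
    (∀ γ1 γ2 : ℝ → ℝ, ContDiff ℝ (⊤ : ℕ∞) γ1 → ContDiff ℝ (⊤ : ℕ∞) γ2 → ∀ p : ℝ × ℝ × ℝ,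
      Wden ψ (p.1, p.2.1 - γ1 p.1, p.2.2 - γ2 p.1) ≠ 0 →
      W (fun q => ψ (q.1, q.2.1 - γ1 q.1, q.2.2 - γ2 q.1)
          - deriv γ1 q.1 * q.2.2 + deriv γ2 q.1 * q.2.1) p
        = W ψ (p.1, p.2.1 - γ1 p.1, p.2.2 - γ2 p.1)) ∧
    -- (e) shifts of ψ by functions of time
    (∀ χ : ℝ → ℝ, ContDiff ℝ (⊤ : ℕ∞) χ → ∀ p : ℝ × ℝ × ℝ,
      Wden ψ p ≠ 0 →
      W (fun q => ψ q + χ q.1) p = W ψ p) := by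
  have hψ₃ : ContDiff ℝ 3 ψ := contDiff_infty.1 hψ 3
  have invariance (S : VorticitySymmetry) (p : ℝ × ℝ × ℝ) (hden : Wden ψ (S.sourcePoint p) ≠ 0) :
      W (fun q => S.amplitude * ψ (S.sourcePoint q) + S.drift q) p = W ψ (S.sourcePoint p) :=
    (W_is_differential_invariant_general S hψ₃ hden).2
  simp only [VorticitySymmetry.amplitude, VorticitySymmetry.drift, VorticitySymmetry.sourcePoint,
    VorticitySymmetry.cosCoeff, VorticitySymmetry.sinCoeff] at invariance
  refine ⟨fun ε p => ?_, fun ε p => ?_, fun θ ε p => ?_, fun γ1 γ2 hγ1 hγ2 p => ?_,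
    fun χ hχ p => ?_⟩
  · simpa using invariance { timeScale := Real.exp (-ε) } p
  · have hamplitude : (Real.exp (-ε) ^ 2)⁻¹ = Real.exp (2 * ε) := by
      rw [← Real.exp_nat_mul, ← Real.exp_neg]
      simp
    simpa [hamplitude, mul_comm] using invariance { spaceScale := Real.exp (-ε) } p
  · simpa using invariance { angle := θ, spin := ε } p
  · simpa [sub_eq_add_neg, add_assoc] using invariance
      { shiftX := γ1, shiftY := γ2,
        contDiff_shiftX := contDiff_infty.1 hγ1 2, contDiff_shiftY := contDiff_infty.1 hγ2 2 } p
  · simpa using invariance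
      { gauge := χ, differentiable_gauge := hχ.differentiable (by simp) } p
end
end
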